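/- For 1 ≤ j,k ≤ n set G_{j,k} := (1/|λ_j|) · ∂/∂z̄_j [ (h(z)^{−1} · ∂h/∂z_k(z))_{k,j} ] evaluated at z = 0, where ∂h/∂z_k is the entrywise Wirtinger derivative of the matrix h; G_{j,k} is the paper's curvature pairing ⟨(Θ_φ e_j | e_k)_{|φ|}, ē_j ∧ e_k⟩(0), with Θ_φ = ∂̄(h^{−1}∂h) the curvature of the connection induced by ∂∂̄φ. Then: (1) for q+1 ≤ j,k ≤ n: G_{j,k} = (1/(|λ_j||λ_k|)) ∂^4φ/∂z̄_j∂z_j∂z̄_k∂z_k(0) + Σ_{t=1}^q (1/(|λ_t||λ_j||λ_k|)) |∂^3φ/∂z̄_j∂z_t∂z̄_k(0)|^2 − Σ_{t=q+1}^n (1/(|λ_t||λ_j||λ_k|)) |∂^3φ/∂z̄_j∂z_t∂z̄_k(0)|^2; (2) for 1 ≤ j,k ≤ q: G_{j,k} = −(1/(|λ_j||λ_k|)) ∂^4φ/∂z̄_j∂z_j∂z̄_k∂z_k(0) − Σ_{t=1}^q (1/(|λ_t||λ_j||λ_k|)) |∂^3φ/∂z̄_j∂z_t∂z̄_k(0)|^2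 + Σ_{t=q+1}^n (1/(|λ_t||λ_j||λ_k|)) |∂^3φ/∂z̄_j∂z_t∂z̄_k(0)|^2; (3) for q+1 ≤ j ≤ n and 1 ≤ k ≤ q: G_{j,k} equals the expression in case (2); (4) for 1 ≤ j ≤ q and q+1 ≤ k ≤ n: G_{j,k} equals the expression in case (1). -/

import Mathlib

open Complex Asymptotics

attribute [local instance] Classical.propDecidable

noncomputable section

/-- `ℂⁿ` as `Fin n → ℂ`. -/
abbrev Cn (n : ℕ) := Fin n → ℂ

/-- Wirtinger derivative `∂/∂z_j = (1/2)(∂/∂x_{2j-1} − i ∂/∂x_{2j})`. -/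
def wd {n : ℕ} (j : Fin n) (f : Cn n → ℂ) : Cn n → ℂ := fun z =>
  (1 / 2 : ℂ) *
    (fderiv ℝ f z (Pi.single j 1) - Complex.I * fderiv ℝ f z (Pi.single j Complex.I))

/-- Wirtinger derivative `∂/∂z̄_j = (1/2)(∂/∂x_{2j-1} + i ∂/∂x_{2j})`. -/
def wdb {n : ℕ} (j : Fin n) (f : Cn n → ℂ) : Cn n → ℂ := fun z =>
  (1 / 2 : ℂ) *
    (fderiv ℝ f z (Pi.single j 1) + Complex.I * fderiv ℝ f z (Pi.single j Complex.I))

/-- A real-valued function regarded as complex-valued. -/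
def cplx {n : ℕ} (φ : Cn n → ℝ) : Cn n → ℂ := fun z => (φ z : ℂ)

/-- `φ` is smooth and `φ(z) = Σ_j λ_j |z_j|² + O(|z|³)` as `z → 0`. -/
def PhiOK {n : ℕ} (lam : Fin n → ℝ) (φ : Cn n → ℝ) : Prop :=
  ContDiff ℝ (⊤ : ℕ∞) φ ∧
    (fun z : Cn n => φ z - ∑ j, lam j * Complex.normSq (z j)) =O[nhds 0] fun z => ‖z‖ ^ 3

/-- The conditions (a)–(e) on the phase function `ψ`. -/
def Admissible {n : ℕ} (lam : Fin n → ℝ) (φ : Cn n → ℝ) (ψ : Cn n → Cn n → ℂ) : Prop :=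
  ContDiff ℝ (⊤ : ℕ∞) (fun p : Cn n × Cn n => ψ p.1 p.2) ∧
  -- (a)
  (∀ z, ψ z z = 0) ∧
  (∀ z w, ψ z w = - (starRingEnd ℂ) (ψ w z)) ∧
  -- (b)
  (∃ c : ℝ, 0 < c ∧ ∀ z w, c * ‖z - w‖ ^ 2 ≤ (ψ z w).im) ∧
  -- (c): on the diagonal, ∂ψ/∂z̄_j = i ∂φ/∂z̄_j, ∂ψ/∂z_j = −i ∂φ/∂z_j,
  --      ∂ψ/∂w̄_j = −i ∂φ/∂z̄_j, ∂ψ/∂w_j = i ∂φ/∂z_j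
  (∀ (z : Cn n) (j : Fin n), wdb j (fun x => ψ x z) z = Complex.I * wdb j (cplx φ) z) ∧
  (∀ (z : Cn n) (j : Fin n), wd j (fun x => ψ x z) z = - Complex.I * wd j (cplx φ) z) ∧
  (∀ (z : Cn n) (j : Fin n), wdb j (fun w => ψ z w) z = - Complex.I * wdb j (cplx φ) z) ∧
  (∀ (z : Cn n) (j : Fin n), wd j (fun w => ψ z w) z = Complex.I * wd j (cplx φ) z) ∧
  -- (d): Σ_j (i ∂ψ/∂z̄_j + ∂φ/∂z̄_j)(−i ∂ψ/∂z_j + ∂φ/∂z_j) vanishes to infinite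
  --      order on the diagonal
  (∀ (m : ℕ) (z : Cn n),
    iteratedFDeriv ℝ m
      (fun p : Cn n × Cn n =>
        ∑ j, (Complex.I * wdb j (fun x => ψ x p.2) p.1 + wdb j (cplx φ) p.1) *
             (- Complex.I * wd j (fun x => ψ x p.2) p.1 + wd j (cplx φ) p.1))
      (z, z) = 0) ∧
  -- (e)
  ((fun p : Cn n × Cn n =>
      ψ p.1 p.2 -
        (Complex.I * ∑ j, ((|lam j| * Complex.normSq (p.1 j - p.2 j) : ℝ) : ℂ)
          + Complex.I * ∑ j, ((lam j : ℝ) : ℂ) *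
              ((starRingEnd ℂ) (p.1 j) * p.2 j - (starRingEnd ℂ) (p.2 j) * p.1 j)))
    =O[nhds 0] fun p => ‖p‖ ^ 3)
/-- The complex Hessian matrix `h(z) = (∂²φ/∂z̄_j∂z_k(z))`. -/
def hMat {n : ℕ} (φ : Cn n → ℝ) (z : Cn n) : Matrix (Fin n) (Fin n) ℂ :=
  Matrix.of fun j k => wdb j (wd k (cplx φ)) z

/-- The entrywise Wirtinger derivative `∂h/∂z_k`. -/
def dh {n : ℕ} (φ : Cn n → ℝ) (k : Fin n) (z : Cn n) : Matrix (Fin n) (Fin n) ℂ :=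
  Matrix.of fun a b => wd k (fun x => hMat φ x a b) z

/-- The curvature pairing `G_{j,k} = (1/|λ_j|) ∂/∂z̄_j [(h⁻¹ ∂h/∂z_k)_{k,j}]` at `0`,
i.e. `⟨(Θ_φ e_j | e_k)_{|φ|}, ē_j ∧ e_k⟩(0)` with `Θ_φ = ∂̄(h⁻¹ ∂h)`. -/
def Gpair {n : ℕ} (lam : Fin n → ℝ) (φ : Cn n → ℝ) (j k : Fin n) : ℂ :=
  ((1 / |lam j| : ℝ) : ℂ) *
    wdb j (fun z => ((hMat φ z)⁻¹ * dh φ k z) k j) 0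

open scoped ContDiff Topology

lemma two_le_inf : (2 : WithTop ℕ∞) ≤ ∞ := by
  exact WithTop.coe_le_coe.2 (le_top : (2 : ℕ∞) ≤ ⊤)

/-- generic Wirtinger-type operator -/
def WW {n : ℕ} (c : ℂ) (j : Fin n) (f : Cn n → ℂ) : Cn n → ℂ := fun z =>
  (1 / 2 : ℂ) *
    (fderiv ℝ f z (Pi.single j 1) + c * fderiv ℝ f z (Pi.single j Complex.I))

lemma wdb_eq {n : ℕ} (j : Fin n) (f : Cn n → ℂ) : wdb j f = WW Complex.I j f := rfl

lemma wd_eq {n : ℕ} (j : Fin n) (f : Cn n → ℂ) : wd j f = WW (-Complex.I) j f := by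
  funext z; simp only [wd, WW]; ring

lemma WW_smooth {n : ℕ} (c : ℂ) (j : Fin n) {f : Cn n → ℂ} (hf : ContDiff ℝ ∞ f) :
    ContDiff ℝ ∞ (WW c j f) := by
  have h1 : ContDiff ℝ ∞ (fderiv ℝ f) := hf.fderiv_right (by simp)
  unfold WW
  exact contDiff_const.mul ((h1.clm_apply contDiff_const).add
    (contDiff_const.mul (h1.clm_apply contDiff_const)))

lemma WW_congr {n : ℕ} (c : ℂ) (j : Fin n) {f g : Cn n → ℂ} {z : Cn n} (h : f =ᶠ[𝓝 z] g) :
    WW c j f z = WW c j g z := by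
  simp only [WW, h.fderiv_eq]

lemma WW_add {n : ℕ} (c : ℂ) (j : Fin n) {f g : Cn n → ℂ} {z : Cn n}
    (hf : DifferentiableAt ℝ f z) (hg : DifferentiableAt ℝ g z) :
    WW c j (fun x => f x + g x) z = WW c j f z + WW c j g z := by
  simp only [WW, fderiv_fun_add hf hg, _root_.add_apply]; ring

lemma WW_mul {n : ℕ} (c : ℂ) (j : Fin n) {f g : Cn n → ℂ} {z : Cn n}
    (hf : DifferentiableAt ℝ f z) (hg : DifferentiableAt ℝ g z) :
    WW c j (fun x => f x * g x) z = WW c j f z * g z + f z * WW c j g z := by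
  simp only [WW, fderiv_fun_mul hf hg, _root_.add_apply,
    _root_.smul_apply, smul_eq_mul]; ring

lemma WW_const {n : ℕ} (c : ℂ) (j : Fin n) (a : ℂ) (z : Cn n) :
    WW c j (fun _ => a) z = 0 := by
  simp [WW]

lemma WW_sum {n : ℕ} {ι : Type*} (s : Finset ι) (c : ℂ) (j : Fin n) {f : ι → Cn n → ℂ} {z : Cn n}
    (hf : ∀ i ∈ s, DifferentiableAt ℝ (f i) z) :
    WW c j (fun x => ∑ i ∈ s, f i x) z = ∑ i ∈ s, WW c j (f i) z := by
  simp only [WW, fderiv_fun_sum hf, _root_.sum_apply, Finset.mul_sum,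
    ← Finset.sum_add_distrib]

lemma WW_coord {n : ℕ} (c : ℂ) (j i : Fin n) (z : Cn n) :
    WW c j (fun x => x i) z = if i = j then (1 / 2) * (1 + c * Complex.I) else 0 := by
  have : fderiv ℝ (fun x : Cn n => x i) z
      = (ContinuousLinearMap.proj i : Cn n →L[ℝ] ℂ) :=
    (ContinuousLinearMap.proj (R := ℝ) (φ := fun _ : Fin n => ℂ) i).fderiv
  simp only [WW, this, ContinuousLinearMap.proj_apply, Pi.single_apply]
  split_ifs <;> simp

lemma WW_conj {n : ℕ} (c : ℂ) (j : Fin n) {f : Cn n → ℂ} {z : Cn n} 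
    (hf : DifferentiableAt ℝ f z) :
    WW c j (fun x => (starRingEnd ℂ) (f x)) z
      = (starRingEnd ℂ) (WW ((starRingEnd ℂ) c) j f z) := by
  have : fderiv ℝ (fun x : Cn n => (starRingEnd ℂ) (f x)) z
      = (Complex.conjCLE : ℂ →L[ℝ] ℂ).comp (fderiv ℝ f z) :=
    ((Complex.conjCLE : ℂ →L[ℝ] ℂ).hasFDerivAt.comp z hf.hasFDerivAt).fderiv
  simp only [WW, this]
  simp [map_ofNat]

lemma DD_apply {n : ℕ} {f : Cn n → ℂ} (hf : ContDiff ℝ ∞ f) (v w z : Cn n) :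
    fderiv ℝ (fun x => fderiv ℝ f x v) z w = fderiv ℝ (fderiv ℝ f) z w v := by
  have h1 : ContDiff ℝ ∞ (fderiv ℝ f) := hf.fderiv_right (by simp)
  have h2 : DifferentiableAt ℝ (fderiv ℝ f) z := h1.differentiable (by simp) z
  rw [fderiv_clm_apply h2 (differentiableAt_const v)]
  simp

lemma WW_WW {n : ℕ} (c d : ℂ) (j k : Fin n) {f : Cn n → ℂ} (hf : ContDiff ℝ ∞ f) (z : Cn n) :
    WW c j (WW d k f) z = (1 / 4) *
      (fderiv ℝ (fderiv ℝ f) z (Pi.single j 1) (Pi.single k 1)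
       + d * fderiv ℝ (fderiv ℝ f) z (Pi.single j 1) (Pi.single k Complex.I)
       + c * fderiv ℝ (fderiv ℝ f) z (Pi.single j Complex.I) (Pi.single k 1)
       + c * d * fderiv ℝ (fderiv ℝ f) z (Pi.single j Complex.I) (Pi.single k Complex.I)) := by
  have h1 : ContDiff ℝ ∞ (fderiv ℝ f) := hf.fderiv_right (by simp)
  have h3 : ∀ v, DifferentiableAt ℝ (fun x => fderiv ℝ f x v) z := fun v =>
    (h1.clm_apply contDiff_const).differentiable (by simp) z
  have key : ∀ w, fderiv ℝ (WW d k f) z w = (1 / 2) *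
      (fderiv ℝ (fderiv ℝ f) z w (Pi.single k 1)
        + d * fderiv ℝ (fderiv ℝ f) z w (Pi.single k Complex.I)) := by
    intro w
    unfold WW
    rw [fderiv_const_mul ((h3 _).fun_add ((h3 _).const_mul d)),
      fderiv_fun_add (h3 _) ((h3 _).const_mul d), fderiv_const_mul (h3 _)]
    simp only [_root_.add_apply, _root_.smul_apply, smul_eq_mul,
      DD_apply hf]
  rw [WW, key, key]; ring

lemma WW_comm {n : ℕ} (c d : ℂ) (j k : Fin n) {f : Cn n → ℂ} (hf : ContDiff ℝ ∞ f) :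
    WW c j (WW d k f) = WW d k (WW c j f) := by
  funext z
  have hs : IsSymmSndFDerivAt ℝ f z := hf.contDiffAt.isSymmSndFDerivAt (by simpa using two_le_inf)
  rw [WW_WW c d j k hf, WW_WW d c k j hf, hs.eq (Pi.single j 1), hs.eq (Pi.single j 1),
    hs.eq (Pi.single j Complex.I), hs.eq (Pi.single j Complex.I)]
  ring

lemma oneD {g : ℝ → ℂ} (hg : ContDiff ℝ ∞ g) (h : g =O[𝓝 0] fun t : ℝ => t ^ 3) :
    deriv (deriv g) 0 = 0 := by
  have g0 : g 0 = 0 := by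
    have := h.eq_zero_imp.self_of_nhds
    exact this (by simp)
  have hlo : ∀ m : ℕ, m < 3 → g =o[𝓝 0] fun t : ℝ => t ^ m := fun m hm =>
    h.trans_isLittleO (isLittleO_pow_pow hm)
  have g1 : deriv g 0 = 0 := by
    apply HasDerivAt.deriv
    rw [hasDerivAt_iff_isLittleO]
    simpa [g0] using hlo 1 (by norm_num)
  have ht := taylor_isLittleO_univ (f := g) (x₀ := 0) (n := 2) (hg.of_le (by simpa using two_le_inf))
  have h2 : (fun x : ℝ => (x ^ 2) • ((1 / 2 : ℂ) * deriv (deriv g) 0)) =o[𝓝 0] fun t : ℝ => t ^ 2 := by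
    have := (hlo 2 (by norm_num)).sub (by simpa using ht)
    refine this.congr_left fun x => ?_
    simp [taylorWithinEval_succ, g0, g1, iteratedDerivWithin_univ, iteratedDeriv_succ]
    ring
  have h3 : (fun x : ℝ => (x ^ 2) * ‖((1 / 2 : ℂ) * deriv (deriv g) 0)‖) =o[𝓝 0] fun t : ℝ => t ^ 2 := by
    refine (h2.norm_left).congr_left fun x => ?_
    rw [norm_smul]; simp
  have h4 : (fun x : ℝ => ‖((1 / 2 : ℂ) * deriv (deriv g) 0)‖) =o[𝓝[≠] 0] fun t : ℝ => (1 : ℝ) := by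
    have h5 := (h3.mono (nhdsWithin_le_nhds (s := {0}ᶜ))).mul_isBigO
      (isBigO_refl (fun t : ℝ => (t ^ 2)⁻¹) (𝓝[≠] 0))
    refine h5.congr' ?_ ?_
    · filter_upwards [self_mem_nhdsWithin] with x hx
      have : x ≠ 0 := hx
      field_simp
    · filter_upwards [self_mem_nhdsWithin] with x hx
      have : x ≠ 0 := hx
      field_simp
  rw [isLittleO_one_iff, tendsto_const_nhds_iff] at h4
  simpa using h4

lemma hess_zero {n : ℕ} {f : Cn n → ℂ} (hf : ContDiff ℝ ∞ f)
    (h : f =O[𝓝 0] fun z => ‖z‖ ^ 3) (v w : Cn n) :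
    fderiv ℝ (fderiv ℝ f) 0 v w = 0 := by
  have h1 : ContDiff ℝ ∞ (fderiv ℝ f) := hf.fderiv_right (by simp)
  have diag : ∀ v, fderiv ℝ (fderiv ℝ f) 0 v v = 0 := by
    intro v
    have hl : ∀ t : ℝ, HasDerivAt (fun t : ℝ => t • v) v t := fun t => by
      simpa using (hasDerivAt_id t).smul_const v
    have e1 : deriv (fun t : ℝ => f (t • v)) = fun t : ℝ => fderiv ℝ f (t • v) v := by
      funext t
      exact ((hf.differentiable (by simp) (t • v)).hasFDerivAt.comp_hasDerivAt t (hl t)).deriv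
    have e2 : deriv (fun t : ℝ => fderiv ℝ f (t • v) v) 0 = fderiv ℝ (fderiv ℝ f) 0 v v := by
      rw [← DD_apply hf]
      have hd : DifferentiableAt ℝ (fun x => fderiv ℝ f x v) ((0 : ℝ) • v) :=
        (h1.clm_apply contDiff_const).differentiable (by simp) _
      have := (hd.hasFDerivAt.comp_hasDerivAt (0 : ℝ) (hl 0)).deriv
      simpa [Function.comp_def] using this
    rw [← e2, ← e1]
    apply oneD
    · exact hf.comp (contDiff_id.smul contDiff_const)
    · have ht : Filter.Tendsto (fun t : ℝ => t • v) (𝓝 0) (𝓝 0) := by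
        have := (hl 0).continuousAt.tendsto
        simpa using this
      refine (h.comp_tendsto ht).trans ?_
      refine IsBigO.of_bound (‖v‖ ^ 3) (Filter.Eventually.of_forall fun t => ?_)
      simp [norm_smul, mul_pow, mul_comm]
  have hs : IsSymmSndFDerivAt ℝ f 0 := hf.contDiffAt.isSymmSndFDerivAt (by simpa using two_le_inf)
  have := diag (v + w)
  simp only [map_add, _root_.add_apply, diag, hs.eq w v] at this
  simpa using this

lemma det_diff {n : ℕ} {M : Cn n → Matrix (Fin n) (Fin n) ℂ} {z : Cn n}
    (hM : ∀ a b, DifferentiableAt ℝ (fun x => M x a b) z) :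
    DifferentiableAt ℝ (fun x => (M x).det) z := by
  simp only [Matrix.det_apply]
  refine DifferentiableAt.fun_sum fun σ _ => ?_
  refine DifferentiableAt.const_smul ?_ _
  have : ∀ s : Finset (Fin n), DifferentiableAt ℝ (fun x => ∏ i ∈ s, M x (σ i) i) z := by
    intro s
    induction s using Finset.induction_on with
    | empty => simp
    | insert a s ha ih =>
      simp only [Finset.prod_insert ha]
      exact (hM _ _).fun_mul ih
  exact this _

lemma inv_diff {n : ℕ} {M : Cn n → Matrix (Fin n) (Fin n) ℂ} {z : Cn n}
    (hM : ∀ a b, DifferentiableAt ℝ (fun x => M x a b) z) (h0 : (M z).det ≠ 0) (a b : Fin n) :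
    DifferentiableAt ℝ (fun x => (M x)⁻¹ a b) z := by
  simp only [Matrix.inv_def, Ring.inverse_eq_inv', Matrix.smul_apply, smul_eq_mul,
    Matrix.adjugate_apply]
  refine ((det_diff hM).inv h0).mul (det_diff fun c d => ?_)
  simp only [Matrix.updateRow_apply]
  split_ifs
  · exact differentiableAt_const _
  · exact hM _ _

lemma hMat_zero {n : ℕ} (lam : Fin n → ℝ) (φ : Cn n → ℝ) (hφ : PhiOK lam φ) (j k : Fin n) :
    WW Complex.I j (WW (-Complex.I) k (cplx φ)) 0 = if j = k then (lam j : ℂ) else 0 := by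
  obtain ⟨hs, hO⟩ := hφ
  have hc : ∀ i : Fin n, ContDiff ℝ ∞ (fun x : Cn n => x i) := fun i =>
    (ContinuousLinearMap.proj (R := ℝ) (φ := fun _ : Fin n => ℂ) i).contDiff
  have hcc : ∀ i : Fin n, ContDiff ℝ ∞ (fun x : Cn n => (starRingEnd ℂ) (x i)) := fun i =>
    (Complex.conjCLE : ℂ →L[ℝ] ℂ).contDiff.comp (hc i)
  have dc : ∀ (i : Fin n) z, DifferentiableAt ℝ (fun x : Cn n => x i) z := fun i z =>
    (hc i).differentiable (by simp) z
  have dcc : ∀ (i : Fin n) z, DifferentiableAt ℝ (fun x : Cn n => (starRingEnd ℂ) (x i)) z :=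
    fun i z => (hcc i).differentiable (by simp) z
  set Q : Cn n → ℂ := fun z => ∑ i, (lam i : ℂ) * (z i * (starRingEnd ℂ) (z i)) with hQ
  have hQs : ContDiff ℝ ∞ Q :=
    ContDiff.sum fun i _ => contDiff_const.mul ((hc i).mul (hcc i))
  have hφs : ContDiff ℝ ∞ (cplx φ) := Complex.ofRealCLM.contDiff.comp hs
  set R : Cn n → ℂ := fun z => cplx φ z - Q z with hR
  have hRs : ContDiff ℝ ∞ R := hφs.sub hQs
  have hRO : R =O[𝓝 0] fun z => ‖z‖ ^ 3 := by
    refine IsBigO.trans (IsBigO.of_norm_left ?_) hO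
    refine (isBigO_refl _ _).norm_left.congr_left fun z => ?_
    rw [← Complex.norm_real]
    congr 1
    simp [hR, hQ, cplx, Complex.mul_conj]
  have e1 : WW (-Complex.I) k (cplx φ) = fun z => WW (-Complex.I) k R z + WW (-Complex.I) k Q z := by
    funext z
    rw [← WW_add _ _ (hRs.differentiable (by simp) z) (hQs.differentiable (by simp) z)]
    simp [hR]
  have e2 : WW (-Complex.I) k Q = fun z => (lam k : ℂ) * (starRingEnd ℂ) (z k) := by
    funext z
    rw [hQ, WW_sum _ _ _ (fun i _ => ((dc i z).fun_mul (dcc i z)).const_mul _)]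
    rw [Finset.sum_eq_single k]
    · rw [WW_mul _ _ (differentiableAt_const _) ((dc k z).fun_mul (dcc k z)), WW_const,
        WW_mul _ _ (dc k z) (dcc k z), WW_coord, WW_conj _ _ (dc k z), WW_coord]
      simp; left; norm_num
    · intro i _ hi
      rw [WW_mul _ _ (differentiableAt_const _) ((dc i z).fun_mul (dcc i z)), WW_const,
        WW_mul _ _ (dc i z) (dcc i z), WW_coord, WW_conj _ _ (dc i z), WW_coord]
      simp [hi]
    · simp
  rw [e1, WW_add _ _ ((WW_smooth _ _ hRs).differentiable (by simp) _)
    ((WW_smooth _ _ hQs).differentiable (by simp) _), WW_WW _ _ _ _ hRs, e2,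
    WW_mul _ _ (differentiableAt_const _) (dcc k _), WW_const, WW_conj _ _ (dc k _), WW_coord]
  simp only [hess_zero hRs hRO]
  by_cases hjk : j = k
  · subst hjk; simp [map_ofNat]; norm_num
  · have : k ≠ j := fun h => hjk h.symm
    simp [hjk, this]

lemma G_formula {n : ℕ} (lam : Fin n → ℝ) (hl : ∀ j, lam j ≠ 0) (φ : Cn n → ℝ)
    (hφ : PhiOK lam φ) (j k : Fin n) :
    Gpair lam φ j k = ((1 / |lam j| : ℝ) : ℂ) * ((1 / lam k : ℝ) : ℂ) *
      (wdb j (wd j (wdb k (wd k (cplx φ)))) 0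
        - ∑ t : Fin n, ((1 / lam t : ℝ) : ℂ) *
          (Complex.normSq (wdb j (wd t (wdb k (cplx φ))) 0) : ℂ)) := by
  have hφs : ContDiff ℝ ∞ (cplx φ) := Complex.ofRealCLM.contDiff.comp hφ.1
  have hlc : ∀ j, (lam j : ℂ) ≠ 0 := fun j => by exact_mod_cast hl j
  have hconj : ∀ c i, (fun z => (starRingEnd ℂ) (WW c i (cplx φ) z))
      = WW ((starRingEnd ℂ) c) i (cplx φ) := by
    intro c i
    funext z
    have := WW_conj ((starRingEnd ℂ) c) i (hφs.differentiable (by simp) z)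
    rw [Complex.conj_conj] at this
    rw [← this]
    congr 1
    funext x
    simp [cplx]
  have hM : ∀ z a b, hMat φ z a b = WW I a (WW (-I) b (cplx φ)) z := by
    intro z a b; simp [hMat, wdb_eq, wd_eq]
  have hMs : ∀ a b, ContDiff ℝ ∞ (fun z => hMat φ z a b) := by
    intro a b; simp only [hM]; exact WW_smooth _ _ (WW_smooth _ _ hφs)
  have hMd : ∀ a b z, DifferentiableAt ℝ (fun z => hMat φ z a b) z := fun a b z =>
    (hMs a b).differentiable (by simp) z
  have hM0 : hMat φ 0 = Matrix.diagonal (fun i => (lam i : ℂ)) := by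
    ext a b
    rw [hM, hMat_zero lam φ hφ, Matrix.diagonal_apply]
  have hdet0 : (hMat φ 0).det ≠ 0 := by
    rw [hM0, Matrix.det_diagonal]
    exact Finset.prod_ne_zero_iff.2 fun i _ => hlc i
  have hB : ∀ a b, DifferentiableAt ℝ (fun z => (hMat φ z)⁻¹ a b) 0 :=
    fun a b => inv_diff (fun a b => hMd a b 0) hdet0 a b
  have hev : ∀ᶠ z in 𝓝 (0 : Cn n), (hMat φ z).det ≠ 0 :=
    (det_diff (fun a b => hMd a b 0)).continuousAt.eventually_ne hdet0
  have hB0 : (hMat φ 0)⁻¹ = Matrix.diagonal (fun i => (lam i : ℂ)⁻¹) := by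
    apply Matrix.inv_eq_right_inv
    rw [hM0, Matrix.diagonal_mul_diagonal, ← Matrix.diagonal_one]
    congr 1
    funext i
    exact mul_inv_cancel₀ (hlc i)
  have hBW : ∀ a b, WW I j (fun z => (hMat φ z)⁻¹ a b) 0
      = - (lam a : ℂ)⁻¹ * (lam b : ℂ)⁻¹ * WW I j (fun z => hMat φ z a b) 0 := by
    intro a b
    have e : WW I j (fun z => ∑ t, hMat φ z a t * (hMat φ z)⁻¹ t b) 0 = 0 := by
      rw [← WW_const I j ((1 : Matrix (Fin n) (Fin n) ℂ) a b) 0]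
      apply WW_congr
      filter_upwards [hev] with z hz
      rw [← Matrix.mul_apply, Matrix.mul_nonsing_inv _ (isUnit_iff_ne_zero.2 hz)]
    rw [WW_sum _ _ _ (fun t _ => (hMd a t 0).fun_mul (hB t b))] at e
    simp only [WW_mul _ _ (hMd a _ 0) (hB _ b), hB0] at e
    simp only [hM0, Matrix.diagonal_apply, Finset.sum_add_distrib, mul_ite, ite_mul, mul_zero,
      zero_mul, Finset.sum_ite_eq, Finset.sum_ite_eq', Finset.mem_univ, if_true] at e
    have h1 := hlc a
    have h2 := hlc b
    field_simp at e ⊢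
    linear_combination e
  have hD : ∀ z a b, dh φ k z a b = WW (-I) k (fun x => hMat φ x a b) z := by
    intro z a b; simp [dh, wd_eq]
  have hDd : ∀ a b, DifferentiableAt ℝ (fun z => dh φ k z a b) 0 := by
    intro a b; simp only [hD]
    exact (WW_smooth _ _ (hMs a b)).differentiable (by simp) _
  have hmain : WW I j (fun z => ((hMat φ z)⁻¹ * dh φ k z) k j) 0
      = (∑ t, WW I j (fun z => (hMat φ z)⁻¹ k t) 0 * dh φ k 0 t j)
        + (lam k : ℂ)⁻¹ * WW I j (fun z => dh φ k z k j) 0 := by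
    simp only [Matrix.mul_apply]
    rw [WW_sum _ _ _ (fun t _ => (hB k t).fun_mul (hDd t j))]
    simp only [WW_mul _ _ (hB k _) (hDd _ j), Finset.sum_add_distrib, hB0]
    simp [Matrix.diagonal_apply]
  -- fourth-order term
  have h4 : WW I j (fun z => dh φ k z k j) 0
      = wdb j (wd j (wdb k (wd k (cplx φ)))) 0 := by
    simp only [hD, wdb_eq, wd_eq, hM]
    rw [show (WW (-I) k fun x => WW I k (WW (-I) j (cplx φ)) x)
      = WW (-I) k (WW I k (WW (-I) j (cplx φ))) from rfl]
    rw [show (fun z => WW (-I) k (WW I k (WW (-I) j (cplx φ))) z)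
      = WW (-I) k (WW I k (WW (-I) j (cplx φ))) from rfl]
    rw [WW_comm I (-I) k j hφs, WW_comm (-I) (-I) k j (WW_smooth _ _ hφs),
      WW_comm (-I) I k k hφs]
  have h3 : ∀ t, WW I j (fun z => hMat φ z k t) 0 = wdb j (wd t (wdb k (cplx φ))) 0 := by
    intro t
    simp only [wdb_eq, wd_eq, hM]
    rw [show (fun z => WW I k (WW (-I) t (cplx φ)) z) = WW I k (WW (-I) t (cplx φ)) from rfl,
      WW_comm I (-I) k t hφs]
  have h3' : ∀ t, dh φ k 0 t j = (starRingEnd ℂ) (wdb j (wd t (wdb k (cplx φ))) 0) := by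
    intro t
    simp only [hD, wdb_eq, wd_eq, hM]
    have c1 : ∀ {f : Cn n → ℂ} (c : ℂ) (i : Fin n), ContDiff ℝ ∞ f →
        (fun z => (starRingEnd ℂ) (WW c i f z))
          = WW ((starRingEnd ℂ) c) i (fun z => (starRingEnd ℂ) (f z)) := by
      intro f c i hf
      funext z
      rw [WW_conj _ _ (hf.differentiable (by simp) z), Complex.conj_conj]
    have s1 := WW_smooth I k hφs
    have s2 := WW_smooth (-I) t s1
    have := congrFun (c1 I j s2) 0
    rw [c1 _ _ s1, hconj] at this
    simp only [map_neg, Complex.conj_I, neg_neg] at this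
    rw [this]
    have e : WW (-I) k (WW I t (WW (-I) j (cplx φ)))
        = WW (-I) j (WW I t (WW (-I) k (cplx φ))) := by
      rw [WW_comm I (-I) t j hφs, WW_comm (-I) (-I) k j (WW_smooth _ _ hφs),
        WW_comm (-I) I k t hφs]
    exact congrFun e 0
  rw [Gpair, wdb_eq, hmain, h4]
  simp only [hBW, h3, h3']
  simp only [Complex.normSq_eq_conj_mul_self]
  rw [mul_assoc, mul_sub, Finset.mul_sum, add_comm, sub_eq_add_neg, ← Finset.sum_neg_distrib]
  push_cast
  simp only [one_div]
  congr 2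
  apply Finset.sum_congr rfl
  intro t _
  ring

theorem statement19 (n q : ℕ) (hn : 1 ≤ n) (hq : q ≤ n) (lam : Fin n → ℝ)
    (hneg : ∀ j : Fin n, (j : ℕ) < q → lam j < 0)
    (hpos : ∀ j : Fin n, q ≤ (j : ℕ) → 0 < lam j)
    (φ : Cn n → ℝ) (hφ : PhiOK lam φ) :
    -- (1) q+1 ≤ j,k ≤ n
    (∀ j k : Fin n, q ≤ (j : ℕ) → q ≤ (k : ℕ) →
      Gpair lam φ j k =
        ((1 / (|lam j| * |lam k|) : ℝ) : ℂ) * wdb j (wd j (wdb k (wd k (cplx φ)))) 0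
        + (∑ t : Fin n, if (t : ℕ) < q then
            ((1 / (|lam t| * |lam j| * |lam k|) : ℝ) : ℂ) *
              (Complex.normSq (wdb j (wd t (wdb k (cplx φ))) 0) : ℂ)
          else 0)
        - ∑ t : Fin n, if q ≤ (t : ℕ) then
            ((1 / (|lam t| * |lam j| * |lam k|) : ℝ) : ℂ) *
              (Complex.normSq (wdb j (wd t (wdb k (cplx φ))) 0) : ℂ)
          else 0) ∧
    -- (2) 1 ≤ j,k ≤ q
    (∀ j k : Fin n, (j : ℕ) < q → (k : ℕ) < q →
      Gpair lam φ j k =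
        - ((1 / (|lam j| * |lam k|) : ℝ) : ℂ) * wdb j (wd j (wdb k (wd k (cplx φ)))) 0
        - (∑ t : Fin n, if (t : ℕ) < q then
            ((1 / (|lam t| * |lam j| * |lam k|) : ℝ) : ℂ) *
              (Complex.normSq (wdb j (wd t (wdb k (cplx φ))) 0) : ℂ)
          else 0)
        + ∑ t : Fin n, if q ≤ (t : ℕ) then
            ((1 / (|lam t| * |lam j| * |lam k|) : ℝ) : ℂ) *
              (Complex.normSq (wdb j (wd t (wdb k (cplx φ))) 0) : ℂ)
          else 0) ∧
    -- (3) q+1 ≤ j ≤ n, 1 ≤ k ≤ q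
    (∀ j k : Fin n, q ≤ (j : ℕ) → (k : ℕ) < q →
      Gpair lam φ j k =
        - ((1 / (|lam j| * |lam k|) : ℝ) : ℂ) * wdb j (wd j (wdb k (wd k (cplx φ)))) 0
        - (∑ t : Fin n, if (t : ℕ) < q then
            ((1 / (|lam t| * |lam j| * |lam k|) : ℝ) : ℂ) *
              (Complex.normSq (wdb j (wd t (wdb k (cplx φ))) 0) : ℂ)
          else 0)
        + ∑ t : Fin n, if q ≤ (t : ℕ) then
            ((1 / (|lam t| * |lam j| * |lam k|) : ℝ) : ℂ) *
              (Complex.normSq (wdb j (wd t (wdb k (cplx φ))) 0) : ℂ)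
          else 0) ∧
    -- (4) 1 ≤ j ≤ q, q+1 ≤ k ≤ n
    (∀ j k : Fin n, (j : ℕ) < q → q ≤ (k : ℕ) →
      Gpair lam φ j k =
        ((1 / (|lam j| * |lam k|) : ℝ) : ℂ) * wdb j (wd j (wdb k (wd k (cplx φ)))) 0
        + (∑ t : Fin n, if (t : ℕ) < q then
            ((1 / (|lam t| * |lam j| * |lam k|) : ℝ) : ℂ) *
              (Complex.normSq (wdb j (wd t (wdb k (cplx φ))) 0) : ℂ)
          else 0)
        - ∑ t : Fin n, if q ≤ (t : ℕ) then
            ((1 / (|lam t| * |lam j| * |lam k|) : ℝ) : ℂ) *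
              (Complex.normSq (wdb j (wd t (wdb k (cplx φ))) 0) : ℂ)
          else 0) := by
  have hl : ∀ j, lam j ≠ 0 := fun j => by
    rcases lt_or_ge (j : ℕ) q with h | h
    · exact (hneg j h).ne
    · exact (hpos j h).ne'
  have habs : ∀ j : Fin n, (j : ℕ) < q → |lam j| = - lam j := fun j h => abs_of_neg (hneg j h)
  have habs' : ∀ j : Fin n, q ≤ (j : ℕ) → |lam j| = lam j := fun j h => abs_of_pos (hpos j h)
  have hsum : ∀ j k : Fin n, ∑ t : Fin n, ((1 / lam t : ℝ) : ℂ) *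
          (Complex.normSq (wdb j (wd t (wdb k (cplx φ))) 0) : ℂ)
      = ((|lam j| * |lam k| : ℝ) : ℂ) * ((∑ t : Fin n, if q ≤ (t : ℕ) then
            ((1 / (|lam t| * |lam j| * |lam k|) : ℝ) : ℂ) *
              (Complex.normSq (wdb j (wd t (wdb k (cplx φ))) 0) : ℂ)
          else 0) - (∑ t : Fin n, if (t : ℕ) < q then
            ((1 / (|lam t| * |lam j| * |lam k|) : ℝ) : ℂ) *
              (Complex.normSq (wdb j (wd t (wdb k (cplx φ))) 0) : ℂ)
          else 0)) := by
    intro j k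
    rw [← Finset.sum_sub_distrib, Finset.mul_sum]
    apply Finset.sum_congr rfl
    intro t _
    have hj : ((|lam j| : ℝ) : ℂ) ≠ 0 := by exact_mod_cast abs_ne_zero.2 (hl j)
    have hk : ((|lam k| : ℝ) : ℂ) ≠ 0 := by exact_mod_cast abs_ne_zero.2 (hl k)
    have ht : (lam t : ℂ) ≠ 0 := by exact_mod_cast hl t
    rcases lt_or_ge (t : ℕ) q with h | h
    · rw [if_pos h, if_neg (not_le.2 h), habs t h]
      push_cast
      field_simp
      ring
    · rw [if_neg (not_lt.2 h), if_pos h, habs' t h]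
      push_cast
      field_simp
      ring
  have hP : ∀ j k : Fin n, q ≤ (k : ℕ) → Gpair lam φ j k =
        ((1 / (|lam j| * |lam k|) : ℝ) : ℂ) * wdb j (wd j (wdb k (wd k (cplx φ)))) 0
        + (∑ t : Fin n, if (t : ℕ) < q then
            ((1 / (|lam t| * |lam j| * |lam k|) : ℝ) : ℂ) *
              (Complex.normSq (wdb j (wd t (wdb k (cplx φ))) 0) : ℂ)
          else 0)
        - ∑ t : Fin n, if q ≤ (t : ℕ) then
            ((1 / (|lam t| * |lam j| * |lam k|) : ℝ) : ℂ) *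
              (Complex.normSq (wdb j (wd t (wdb k (cplx φ))) 0) : ℂ)
          else 0 := by
    intro j k h
    rw [G_formula lam hl φ hφ, hsum]
    have key : ∀ D A B : ℂ, ((1 / |lam j| : ℝ) : ℂ) * ((1 / lam k : ℝ) : ℂ) * (D - ((|lam j| * |lam k| : ℝ) : ℂ) * (B - A)) = ((1 / (|lam j| * |lam k|) : ℝ) : ℂ) * D + A - B := by
      intro D A B
      have hj : ((|lam j| : ℝ) : ℂ) ≠ 0 := by exact_mod_cast abs_ne_zero.2 (hl j)
      have hk : (lam k : ℂ) ≠ 0 := by exact_mod_cast hl k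
      rw [habs' k h]
      push_cast
      field_simp
      ring
    exact key _ _ _
  have hN : ∀ j k : Fin n, (k : ℕ) < q → Gpair lam φ j k =
        - ((1 / (|lam j| * |lam k|) : ℝ) : ℂ) * wdb j (wd j (wdb k (wd k (cplx φ)))) 0
        - (∑ t : Fin n, if (t : ℕ) < q then
            ((1 / (|lam t| * |lam j| * |lam k|) : ℝ) : ℂ) *
              (Complex.normSq (wdb j (wd t (wdb k (cplx φ))) 0) : ℂ)
          else 0)
        + ∑ t : Fin n, if q ≤ (t : ℕ) then
            ((1 / (|lam t| * |lam j| * |lam k|) : ℝ) : ℂ) *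
              (Complex.normSq (wdb j (wd t (wdb k (cplx φ))) 0) : ℂ)
          else 0 := by
    intro j k h
    rw [G_formula lam hl φ hφ, hsum]
    have key : ∀ D A B : ℂ, ((1 / |lam j| : ℝ) : ℂ) * ((1 / lam k : ℝ) : ℂ) * (D - ((|lam j| * |lam k| : ℝ) : ℂ) * (B - A)) = - ((1 / (|lam j| * |lam k|) : ℝ) : ℂ) * D - A + B := by
      intro D A B
      have hj : ((|lam j| : ℝ) : ℂ) ≠ 0 := by exact_mod_cast abs_ne_zero.2 (hl j)
      have hk : (lam k : ℂ) ≠ 0 := by exact_mod_cast hl k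
      rw [habs k h]
      push_cast
      field_simp
      ring
    exact key _ _ _
  exact ⟨fun j k _ h => hP j k h, fun j k _ h => hN j k h, fun j k _ h => hN j k h,
    fun j k _ h => hP j k h⟩
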